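/- arXiv:2009.06224 — 2 statements merged into one kernel-verified Lean document; each statement's English description precedes it below -/
import Mathlib

section
/- A Cournot game satisfying assumptions (A1) and (A2) has exactly one Nash equilibrium. -/
/-!
Fix the total output `S`. A firm producing `x` takes `p S + p' S * x` for its marginal revenue, and
at an equilibrium this number is a subgradient of its cost at `x`; concavity of `p` makes this
first-order condition sufficient as well. Where `p' S < 0` the condition has exactly one solution
`x = r S`, which depends continuously on `S` and decreases when both `p S` and `p' S` do.
Equilibria are thus the solutions of `∑ i, r i S = S`: uniqueness follows from monotonicity, and
existence from the intermediate value theorem on `[a, ymax]`, since at `ymax` nobody produces while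
for small `a > 0` some firm alone would produce at least `a`, unless producing nothing is already an
equilibrium.
-/

open Set Filter Topology

section ConvexAnalysis

lemma continuousOn_of_monotoneOn_of_ordConnected_image {α β : Type*}
    [LinearOrder α] [TopologicalSpace α] [OrderTopology α]
    [LinearOrder β] [TopologicalSpace β] [OrderTopology β] [DenselyOrdered β]
    {f : α → β} {s : Set α} (hs : s.OrdConnected) (hf : MonotoneOn f s)
    (himage : (f '' s).OrdConnected) : ContinuousOn f s := by
  have hmono : Monotone (s.imageFactorization f) := fun x y hxy => hf x.2 y.2 hxy
  have hcont := hmono.continuous_of_surjective imageFactorization_surjective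
  exact continuousOn_iff_continuous_domRestrict.2 (continuous_subtype_val.comp hcont)

variable {s : Set ℝ} {f f' : ℝ → ℝ}

lemma le_add_deriv_mul_sub_of_concaveOn {d x y : ℝ} (hf : ConcaveOn ℝ s f)
    (hd : HasDerivWithinAt f d s x) (hx : x ∈ s) (hy : y ∈ s) :
    f y ≤ f x + d * (y - x) := by
  rcases lt_trichotomy x y with h | rfl | h
  · have hslope := hf.slope_le_of_hasDerivWithinAt hx hy h hd
    rw [slope_def_field, div_le_iff₀ (sub_pos.2 h)] at hslope
    linarith
  · simp
  · have hslope := hf.le_slope_of_hasDerivWithinAt hy hx h hd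
    rw [slope_def_field, le_div_iff₀ (sub_pos.2 h)] at hslope
    linarith

lemma antitoneOn_deriv_of_concaveOn (hf : ConcaveOn ℝ s f)
    (hf' : ∀ x ∈ s, HasDerivWithinAt f (f' x) s x) : AntitoneOn f' s := by
  intro x hx y hy hxy
  rcases hxy.eq_or_lt with rfl | h
  · rfl
  · exact (hf.le_slope_of_hasDerivWithinAt hx hy h (hf' y hy)).trans
      (hf.slope_le_of_hasDerivWithinAt hx hy h (hf' x hx))

lemma continuousOn_deriv_of_concaveOn (hf : ConcaveOn ℝ s f)
    (hf' : ∀ x ∈ s, HasDerivWithinAt f (f' x) s x) : ContinuousOn f' s := by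
  have hs := hf.1.ordConnected
  -- A monotone derivative cannot jump, by Darboux's theorem.
  have hneg : ContinuousOn (-f') s :=
    continuousOn_of_monotoneOn_of_ordConnected_image hs (antitoneOn_deriv_of_concaveOn hf hf').neg
      (hs.image_hasDerivWithinAt fun x hx => (hf' x hx).neg)
  simpa using hneg.neg

lemma continuousOn_Ici_of_convexOn_of_monotoneOn {a : ℝ} (hconv : ConvexOn ℝ (Ici a) f)
    (hmono : MonotoneOn f (Ici a)) : ContinuousOn f (Ici a) := by
  have hchord : ∀ t ∈ Icc a (a + 1), f t ≤ (1 - (t - a)) * f a + (t - a) * f (a + 1) := by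
    intro t ht
    have h := hconv.2 self_mem_Ici (show a + 1 ∈ Ici a by simp)
      (show 0 ≤ 1 - (t - a) by linarith [ht.2]) (sub_nonneg.2 ht.1) (by ring)
    simp only [smul_eq_mul] at h
    rwa [show (1 - (t - a)) * a + (t - a) * (a + 1) = t by ring] at h
  have hchord_lim : Tendsto (fun t => (1 - (t - a)) * f a + (t - a) * f (a + 1))
      (𝓝[≥] a) (𝓝 (f a)) := by
    have h : Continuous fun t => (1 - (t - a)) * f a + (t - a) * f (a + 1) := by fun_prop
    simpa using (h.tendsto a).mono_left nhdsWithin_le_nhds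
  refine hconv.continuousOn_Ici
    (tendsto_of_tendsto_of_tendsto_of_le_of_le' tendsto_const_nhds hchord_lim ?_ ?_)
  · filter_upwards [self_mem_nhdsWithin] with t ht using hmono self_mem_Ici ht ht
  · filter_upwards [Icc_mem_nhdsGE (lt_add_one a)] with t ht using hchord t ht

lemma fderiv_sub_le_sub_of_isMaxOn {E : Type*} [NormedAddCommGroup E] [NormedSpace ℝ E]
    {s : Set E} {f g : E → ℝ} {L : E →L[ℝ] ℝ} {x z : E} (hg : ConvexOn ℝ s g)
    (hf : HasFDerivWithinAt f L s x) (hmax : IsMaxOn (fun y => f y - g y) s x)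
    (hx : x ∈ s) (hz : z ∈ s) : L (z - x) ≤ g z - g x := by
  let line : ℝ → E := AffineMap.lineMap x z
  have hline : MapsTo line (Icc 0 1) s := fun t ht => hg.1.lineMap_mem hx hz ht
  have hderiv : HasDerivWithinAt (fun t => f (line t) - t * (g z - g x))
      (L (z - x) - 1 * (g z - g x)) (Icc 0 1) 0 :=
    (hf.comp_hasDerivWithinAt_of_eq 0 AffineMap.hasDerivWithinAt_lineMap hline
      (by simp)).sub ((hasDerivWithinAt_id 0 _).mul_const _)
  have hmax_line : IsMaxOn (fun t => f (line t) - t * (g z - g x)) (Icc 0 1) 0 := by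
    intro t ht
    have hmax_t : f (line t) - g (line t) ≤ f x - g x := hmax (hline ht)
    have hconv : g (line t) ≤ (1 - t) * g x + t * g z := by
      simpa only [line, AffineMap.lineMap_apply_module, smul_eq_mul] using
        hg.2 hx hz (sub_nonneg.2 ht.2) ht.1 (by ring)
    simp only [mem_ofPred_eq, line, AffineMap.lineMap_apply_zero] at hmax_t hconv ⊢
    linarith
  have hnonpos := hmax_line.localize.hasFDerivWithinAt_nonpos hderiv.hasFDerivWithinAt
    (sub_mem_posTangentConeAt_of_segment_subset (segment_eq_Icc zero_le_one).subset)
  simpa using hnonpos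

end ConvexAnalysis

/-- `IsStationaryOutput c P m x`: the output `x ≥ 0` satisfies the first-order condition of a firm
with cost function `c` that faces the price `P` and the price slope `m`, that is, its marginal
revenue `P + m * x` is a subgradient of `c` at `x` relative to `[0, ∞)`. For convex
differentiable `c` this says that `P + m * x ≤ c' x`, with equality if `0 < x`. -/
def IsStationaryOutput (c : ℝ → ℝ) (P m x : ℝ) : Prop :=
  0 ≤ x ∧ ∀ z, 0 ≤ z → (P + m * x) * (z - x) ≤ c z - c x

namespace IsStationaryOutput

variable {c : ℝ → ℝ} {P Q m n x y : ℝ}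

lemma sub_mul_sub_nonpos (hx : IsStationaryOutput c P m x) (hy : IsStationaryOutput c Q n y) :
    (P + m * x - (Q + n * y)) * (y - x) ≤ 0 := by
  linarith [hx.2 y hy.1, hy.2 x hx.1]

lemma le_of_price_le (hx : IsStationaryOutput c P m x) (hy : IsStationaryOutput c Q n y)
    (hprice : Q ≤ P) (hslope : n ≤ m) (hn : n < 0) : y ≤ x := by
  by_contra! hxy
  have hmarginal : Q + n * y < P + m * x := by
    linarith [mul_lt_mul_of_neg_left hxy hn, mul_le_mul_of_nonneg_right hslope hx.1]
  linarith [mul_pos (sub_pos.2 hmarginal) (sub_pos.2 hxy), hx.sub_mul_sub_nonpos hy]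

lemma eq_zero_of_nonpos (hx : IsStationaryOutput c P m x) (hc : StrictMonoOn c (Ici 0))
    (hP : P ≤ 0) (hm : m ≤ 0) : x = 0 := by
  by_contra hne
  have hpos : 0 < x := lt_of_le_of_ne' hx.1 hne
  have hcost : c 0 < c x := hc self_mem_Ici hx.1 hpos
  have hrevenue : (P + m * x) * x ≤ 0 :=
    mul_nonpos_of_nonpos_of_nonneg (add_nonpos hP (mul_nonpos_of_nonpos_of_nonneg hm hx.1)) hx.1
  linarith [hx.2 0 le_rfl]

lemma exists_of_slope_neg (hconv : ConvexOn ℝ (Ici 0) c) (hmono : MonotoneOn c (Ici 0))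
    (P : ℝ) (hm : m < 0) : ∃ x, IsStationaryOutput c P m x := by
  let R : ℝ → ℝ := fun z => P * z + m / 2 * z ^ 2
  obtain ⟨M, hM, hmM⟩ : ∃ M, 0 ≤ M ∧ m * M = -|P| :=
    ⟨-|P| / m, div_nonneg_of_nonpos (neg_nonpos.2 (abs_nonneg P)) hm.le, mul_div_cancel₀ _ hm.ne⟩
  have hR_le : ∀ z, M ≤ z → R z ≤ R M := by
    intro z hz
    have hslope : P + m * M ≤ 0 := by linarith [le_abs_self P]
    have hfactor : P + m / 2 * (z + M) ≤ 0 := by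
      linarith [mul_le_mul_of_nonpos_left hz hm.le]
    calc R z = R M + (P + m / 2 * (z + M)) * (z - M) := by ring
      _ ≤ R M := add_le_of_nonpos_right
        (mul_nonpos_of_nonpos_of_nonneg hfactor (sub_nonneg.2 hz))
  have hcont : ContinuousOn (fun z => R z - c z) (Icc 0 M) :=
    ContinuousOn.sub (by fun_prop)
      ((continuousOn_Ici_of_convexOn_of_monotoneOn hconv hmono).mono Icc_subset_Ici_self)
  obtain ⟨x, hx, hmax⟩ := isCompact_Icc.exists_isMaxOn (nonempty_Icc.2 hM) hcont
  have hmax_Ici : IsMaxOn (fun z => R z - c z) (Ici 0) x := by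
    intro z (hz : 0 ≤ z)
    rcases le_total z M with hzM | hMz
    · exact hmax ⟨hz, hzM⟩
    · exact (sub_le_sub (hR_le z hMz) (hmono hM hz hMz)).trans (hmax ⟨hM, le_rfl⟩)
  have hderiv : HasDerivWithinAt R (P + m * x) (Ici 0) x := by
    refine HasDerivAt.hasDerivWithinAt (HasDerivAt.congr_deriv
      (((hasDerivAt_id x).const_mul P).add ((hasDerivAt_pow 2 x).const_mul (m / 2))) ?_)
    norm_num
    ring
  refine ⟨x, hx.1, fun z hz => ?_⟩
  simpa [mul_comm] using
    fderiv_sub_le_sub_of_isMaxOn hconv hderiv.hasFDerivWithinAt hmax_Ici hx.1 hz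

lemma of_tendsto {α : Type*} {l : Filter α} [l.NeBot] {Pₐ mₐ xₐ : α → ℝ}
    (hc : ContinuousOn c (Ici 0)) (hP : Tendsto Pₐ l (𝓝 P)) (hm : Tendsto mₐ l (𝓝 m))
    (hx : Tendsto xₐ l (𝓝 x)) (h : ∀ᶠ t in l, IsStationaryOutput c (Pₐ t) (mₐ t) (xₐ t)) :
    IsStationaryOutput c P m x := by
  have hx_nonneg : 0 ≤ x := ge_of_tendsto hx (h.mono fun t ht => ht.1)
  have hcx : Tendsto (fun t => c (xₐ t)) l (𝓝 (c x)) :=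
    (hc x hx_nonneg).tendsto.comp (tendsto_nhdsWithin_iff.2 ⟨hx, h.mono fun t ht => ht.1⟩)
  exact ⟨hx_nonneg, fun z hz => le_of_tendsto_of_tendsto
    ((hP.add (hm.mul hx)).mul (tendsto_const_nhds.sub hx)) (tendsto_const_nhds.sub hcx)
    (h.mono fun t ht => ht.2 z hz)⟩

lemma neg_slope_mul_abs_sub_le (hx : IsStationaryOutput c P m x)
    (hy : IsStationaryOutput c Q n y) : -n * |y - x| ≤ |Q - P + (n - m) * x| := by
  rcases eq_or_ne y x with rfl | hne
  · simp
  refine le_of_mul_le_mul_right ?_ (abs_pos.2 (sub_ne_zero.2 hne))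
  calc -n * |y - x| * |y - x| = -n * (y - x) ^ 2 := by rw [mul_assoc, abs_mul_abs_self, sq]
    _ ≤ (Q - P + (n - m) * x) * (y - x) := by linarith [hx.sub_mul_sub_nonpos hy]
    _ ≤ |Q - P + (n - m) * x| * |y - x| := by rw [← abs_mul]; exact le_abs_self _

lemma continuousOn {α : Type*} [TopologicalSpace α] {s : Set α} {P m r : α → ℝ}
    (hP : ContinuousOn P s) (hm : ContinuousOn m s) (hm_neg : ∀ t ∈ s, m t < 0)
    (hr : ∀ t ∈ s, IsStationaryOutput c (P t) (m t) (r t)) : ContinuousOn r s := by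
  intro t₀ ht₀
  let bound : α → ℝ := fun t => |P t - P t₀ + (m t - m t₀) * r t₀| / -m t
  have hbound : Tendsto bound (𝓝[s] t₀) (𝓝 0) := by
    have h : ContinuousWithinAt bound s t₀ :=
      (((hP t₀ ht₀).sub continuousWithinAt_const).add
        (((hm t₀ ht₀).sub continuousWithinAt_const).mul continuousWithinAt_const)).abs.div
          (hm t₀ ht₀).neg (neg_ne_zero.2 (hm_neg t₀ ht₀).ne)
    simpa [bound] using h.tendsto
  refine tendsto_iff_dist_tendsto_zero.2 (squeeze_zero' (.of_forall fun _ => dist_nonneg) ?_ hbound)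
  filter_upwards [self_mem_nhdsWithin] with t ht
  rw [Real.dist_eq, le_div_iff₀' (neg_pos.2 (hm_neg t ht))]
  exact (hr t₀ ht₀).neg_slope_mul_abs_sub_le (hr t ht)

end IsStationaryOutput

/-- Assumption (A1) on a price function `p` with derivative `p'`. From `ymax` on, the price may be
truncated to `0` or keep falling below it. -/
structure IsPriceFunction (p p' : ℝ → ℝ) (ymax : ℝ) : Prop where
  ymax_pos : 0 < ymax
  concaveOn : ConcaveOn ℝ (Icc 0 ymax) p
  strictAntiOn : StrictAntiOn p (Icc 0 ymax)
  hasDerivWithinAt : ∀ y ∈ Icc 0 ymax, HasDerivWithinAt p (p' y) (Icc 0 ymax) y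
  nonpos : ∀ y, ymax ≤ y → p y ≤ 0

namespace IsPriceFunction

variable {p p' c : ℝ → ℝ} {ymax q x S : ℝ}

lemma continuousOn (hp : IsPriceFunction p p' ymax) : ContinuousOn p (Icc 0 ymax) :=
  fun y hy => (hp.hasDerivWithinAt y hy).continuousWithinAt

lemma continuousOn_deriv (hp : IsPriceFunction p p' ymax) : ContinuousOn p' (Icc 0 ymax) :=
  continuousOn_deriv_of_concaveOn hp.concaveOn hp.hasDerivWithinAt

lemma deriv_nonpos (hp : IsPriceFunction p p' ymax) (hS : S ∈ Icc 0 ymax) : p' S ≤ 0 := by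
  rw [← (hp.hasDerivWithinAt S hS).derivWithin (uniqueDiffOn_Icc hp.ymax_pos S hS)]
  exact hp.strictAntiOn.antitoneOn.derivWithin_nonpos

lemma deriv_neg (hp : IsPriceFunction p p' ymax) (hS : S ∈ Ioc 0 ymax) : p' S < 0 := by
  have hzero : (0 : ℝ) ∈ Icc 0 ymax := left_mem_Icc.2 hp.ymax_pos.le
  have hS' := Ioc_subset_Icc_self hS
  have hslope : slope p 0 S < 0 := by
    rw [slope_def_field]
    exact div_neg_of_neg_of_pos (sub_neg.2 (hp.strictAntiOn hzero hS' hS.1)) (sub_pos.2 hS.1)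
  exact (hp.concaveOn.le_slope_of_hasDerivWithinAt hzero hS' hS.1
    (hp.hasDerivWithinAt S hS')).trans_lt hslope

lemma hasDerivWithinAt_revenue (hp : IsPriceFunction p p' ymax) (hq : 0 ≤ q) (hx : 0 ≤ x)
    (hqx : q + x < ymax) :
    HasDerivWithinAt (fun z => p (q + z) * z) (p (q + x) + p' (q + x) * x) (Ici 0) x := by
  have hprice : HasDerivWithinAt p (p' (q + x)) (Ici 0) (q + x) :=
    (hp.hasDerivWithinAt _ ⟨add_nonneg hq hx, hqx.le⟩).mono_of_mem_nhdsWithin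
      (inter_mem_nhdsWithin _ (Iic_mem_nhds hqx))
  have hcomp : HasDerivWithinAt (fun z => p (q + z)) (p' (q + x) * 1) (Ici 0) x :=
    hprice.comp x ((hasDerivWithinAt_id x _).const_add q) fun z hz => add_nonneg hq hz
  exact (hcomp.mul (hasDerivWithinAt_id x _)).congr_deriv (by simp [add_comm])

lemma isStationaryOutput_of_isMaxOn (hp : IsPriceFunction p p' ymax)
    (hc : ConvexOn ℝ (Ici 0) c) (hq : 0 ≤ q) (hx : 0 ≤ x) (hqx : q + x < ymax)
    (hmax : IsMaxOn (fun z => p (q + z) * z - c z) (Ici 0) x) :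
    IsStationaryOutput c (p (q + x)) (p' (q + x)) x := by
  refine ⟨hx, fun z hz => ?_⟩
  simpa [mul_comm] using fderiv_sub_le_sub_of_isMaxOn hc
    (hp.hasDerivWithinAt_revenue hq hx hqx).hasFDerivWithinAt hmax hx hz

lemma isMaxOn_of_isStationaryOutput (hp : IsPriceFunction p p' ymax)
    (hc : MonotoneOn c (Ici 0)) (hq : 0 ≤ q) (hqx : q + x ≤ ymax)
    (hx : IsStationaryOutput c (p (q + x)) (p' (q + x)) x) :
    IsMaxOn (fun z => p (q + z) * z - c z) (Ici 0) x := by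
  have hS : q + x ∈ Icc 0 ymax := ⟨add_nonneg hq hx.1, hqx⟩
  have hmax_Icc : ∀ z, 0 ≤ z → q + z ≤ ymax →
      p (q + z) * z - c z ≤ p (q + x) * x - c x := by
    intro z hz hqz
    have htangent : p (q + z) ≤ p (q + x) + p' (q + x) * (z - x) := by
      simpa using le_add_deriv_mul_sub_of_concaveOn hp.concaveOn (hp.hasDerivWithinAt _ hS) hS
        ⟨add_nonneg hq hz, hqz⟩
    have hsq : p' (q + x) * (z - x) ^ 2 ≤ 0 :=
      mul_nonpos_of_nonpos_of_nonneg (hp.deriv_nonpos hS) (sq_nonneg _)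
    have hrevenue := calc
      p (q + z) * z ≤ (p (q + x) + p' (q + x) * (z - x)) * z :=
          mul_le_mul_of_nonneg_right htangent hz
      _ = p (q + x) * x + (p (q + x) + p' (q + x) * x) * (z - x) + p' (q + x) * (z - x) ^ 2 := by
          ring
      _ ≤ p (q + x) * x + (c z - c x) := by linarith [hx.2 z hz]
    linarith
  intro z (hz : 0 ≤ z)
  rcases le_total (q + z) ymax with hqz | hqz
  · exact hmax_Icc z hz hqz
  · have hloss : p (q + z) * z - c z ≤ p (q + 0) * 0 - c 0 := by
      linarith [mul_nonpos_of_nonpos_of_nonneg (hp.nonpos _ hqz) hz, hc self_mem_Ici hz hz]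
    exact hloss.trans (hmax_Icc 0 le_rfl (by linarith [hx.1]))

lemma exists_le_of_isStationaryOutput (hp : IsPriceFunction p p' ymax)
    (hc : ContinuousOn c (Ici 0)) (hzero : ¬ IsStationaryOutput c (p 0) (p' 0) 0) :
    ∃ a ∈ Ioc 0 ymax, ∀ x, IsStationaryOutput c (p a) (p' a) x → a ≤ x := by
  contrapose! hzero
  choose! x hx hxa using hzero
  have hmem : ∀ᶠ a in 𝓝[>] 0, a ∈ Ioc 0 ymax := Ioc_mem_nhdsGT hp.ymax_pos
  have hlim : ∀ {f : ℝ → ℝ}, ContinuousOn f (Icc 0 ymax) → Tendsto f (𝓝[>] 0) (𝓝 (f 0)) :=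
    fun hf => (hf 0 (left_mem_Icc.2 hp.ymax_pos.le)).mono_left <|
      nhdsWithin_le_of_mem (hmem.mono fun _ ha => Ioc_subset_Icc_self ha)
  have hx_lim : Tendsto x (𝓝[>] 0) (𝓝 0) :=
    squeeze_zero' (hmem.mono fun a ha => (hx a ha).1) (hmem.mono fun a ha => (hxa a ha).le)
      (tendsto_id.mono_left nhdsWithin_le_nhds)
  exact .of_tendsto hc (hlim hp.continuousOn) (hlim hp.continuousOn_deriv) hx_lim (hmem.mono hx)

end IsPriceFunction

section Equilibrium

variable {ι : Type*} [Fintype ι] {p p' : ℝ → ℝ} {ymax : ℝ} {C : ι → ℝ → ℝ} {x y : ι → ℝ}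

lemma eq_of_isStationaryOutput_of_sum_le (hp : IsPriceFunction p p' ymax)
    (hx : ∀ i, IsStationaryOutput (C i) (p (∑ j, x j)) (p' (∑ j, x j)) (x i))
    (hy : ∀ i, IsStationaryOutput (C i) (p (∑ j, y j)) (p' (∑ j, y j)) (y i))
    (hxy : ∑ j, x j ≤ ∑ j, y j) (hy_le : ∑ j, y j ≤ ymax) : x = y := by
  have hx_mem : ∑ j, x j ∈ Icc 0 ymax :=
    ⟨Finset.sum_nonneg fun i _ => (hx i).1, hxy.trans hy_le⟩
  have hle : ∀ i, y i ≤ x i := by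
    intro i
    by_contra! hlt
    have hy_pos : 0 < ∑ j, y j :=
      Finset.sum_pos' (fun j _ => (hy j).1) ⟨i, Finset.mem_univ i, (hx i).1.trans_lt hlt⟩
    have hy_mem : ∑ j, y j ∈ Ioc 0 ymax := ⟨hy_pos, hy_le⟩
    have hy_mem' := Ioc_subset_Icc_self hy_mem
    exact hlt.not_ge <| (hx i).le_of_price_le (hy i)
      (hp.strictAntiOn.antitoneOn hx_mem hy_mem' hxy)
      (antitoneOn_deriv_of_concaveOn hp.concaveOn hp.hasDerivWithinAt hx_mem hy_mem' hxy)
      (hp.deriv_neg hy_mem)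
  have hsum : ∑ j, y j = ∑ j, x j := (Finset.sum_le_sum fun i _ => hle i).antisymm hxy
  funext i
  exact ((Finset.sum_eq_sum_iff_of_le fun i _ => hle i).1 hsum i (Finset.mem_univ i)).symm

lemma exists_isStationaryOutput_sum (hp : IsPriceFunction p p' ymax)
    (hC_convex : ∀ i, ConvexOn ℝ (Ici 0) (C i)) (hC_mono : ∀ i, StrictMonoOn (C i) (Ici 0)) :
    ∃ x : ι → ℝ, ∑ j, x j ≤ ymax ∧
      ∀ i, IsStationaryOutput (C i) (p (∑ j, x j)) (p' (∑ j, x j)) (x i) := by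
  by_cases hzero : ∀ i, IsStationaryOutput (C i) (p 0) (p' 0) 0
  · exact ⟨0, by simpa using hp.ymax_pos.le, by simpa using hzero⟩
  obtain ⟨i₀, hi₀⟩ := not_forall.1 hzero
  obtain ⟨a, ha, ha_le⟩ := hp.exists_le_of_isStationaryOutput
    (continuousOn_Ici_of_convexOn_of_monotoneOn (hC_convex i₀) (hC_mono i₀).monotoneOn) hi₀
  have hexists : ∀ i, ∀ S ∈ Ioc 0 ymax, ∃ x, IsStationaryOutput (C i) (p S) (p' S) x :=
    fun i S hS => IsStationaryOutput.exists_of_slope_neg (hC_convex i) (hC_mono i).monotoneOn _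
      (hp.deriv_neg hS)
  choose! r hr using hexists
  have hr_cont : ∀ i, ContinuousOn (r i) (Ioc 0 ymax) := fun i =>
    IsStationaryOutput.continuousOn (hp.continuousOn.mono Ioc_subset_Icc_self)
      (hp.continuousOn_deriv.mono Ioc_subset_Icc_self) (fun _ hS => hp.deriv_neg hS) (hr i)
  have hleft : a ≤ ∑ i, r i a :=
    (ha_le _ (hr i₀ a ha)).trans <|
      Finset.single_le_sum (f := (r · a)) (fun i _ => (hr i a ha).1) (Finset.mem_univ i₀)
  have hright : ∑ i, r i ymax ≤ ymax := by
    have hymax : ymax ∈ Ioc 0 ymax := right_mem_Ioc.2 hp.ymax_pos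
    have hr_zero : ∀ i, r i ymax = 0 := fun i =>
      (hr i ymax hymax).eq_zero_of_nonpos (hC_mono i) (hp.nonpos _ le_rfl) (hp.deriv_neg hymax).le
    simpa [hr_zero] using hp.ymax_pos.le
  obtain ⟨S, hS, hfix⟩ := exists_mem_Icc_isFixedPt (f := fun S => ∑ i, r i S)
    (continuousOn_finsetSum _ fun i _ => (hr_cont i).mono fun S hS => ⟨ha.1.trans_le hS.1, hS.2⟩)
    ha.2 hleft hright
  have hsum : ∑ i, r i S = S := hfix
  refine ⟨(r · S), hsum.trans_le hS.2, fun i => ?_⟩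
  rw [hsum]
  exact hr i S ⟨ha.1.trans_le hS.1, hS.2⟩

variable [DecidableEq ι]

/-- Nash equilibria of the Cournot game with price function `p` and cost functions `C i`: no player
can gain by a unilateral change of output. -/
def IsNashEquilibrium (p : ℝ → ℝ) (C : ι → ℝ → ℝ) (x : ι → ℝ) : Prop :=
  (∀ i, 0 ≤ x i) ∧ ∀ i, ∀ xi : ℝ, 0 ≤ xi →
    p (∑ j, Function.update x i xi j) * xi - C i xi ≤ p (∑ j, x j) * x i - C i (x i)

lemma isNashEquilibrium_iff_isMaxOn :
    IsNashEquilibrium p C x ↔ (∀ i, 0 ≤ x i) ∧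
      ∀ i, IsMaxOn (fun z => p (∑ j, x j - x i + z) * z - C i z) (Ici 0) (x i) := by
  have hupdate : ∀ i z, ∑ j, Function.update x i z j = ∑ j, x j - x i + z := by
    intro i z
    rw [Finset.sum_update_of_mem (Finset.mem_univ i), Finset.sdiff_singleton_eq_erase,
      Finset.sum_erase_eq_sub (Finset.mem_univ i), add_comm]
  simp only [IsNashEquilibrium, hupdate, isMaxOn_iff, mem_Ici, sub_add_cancel]

lemma IsNashEquilibrium.sum_lt (hp : IsPriceFunction p p' ymax)
    (hC_mono : ∀ i, StrictMonoOn (C i) (Ici 0)) (hx : IsNashEquilibrium p C x) :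
    ∑ j, x j < ymax := by
  by_contra! hle
  have hx_zero : ∀ i, x i = 0 := by
    intro i
    by_contra hne
    have hcost := hC_mono i self_mem_Ici (hx.1 i) (lt_of_le_of_ne' (hx.1 i) hne)
    have hrevenue := mul_nonpos_of_nonpos_of_nonneg (hp.nonpos _ hle) (hx.1 i)
    linarith [hx.2 i 0 le_rfl]
  have hsum : ∑ j, x j = 0 := Finset.sum_eq_zero fun i _ => hx_zero i
  linarith [hp.ymax_pos]

theorem isNashEquilibrium_iff_isStationaryOutput (hp : IsPriceFunction p p' ymax)
    (hC_convex : ∀ i, ConvexOn ℝ (Ici 0) (C i)) (hC_mono : ∀ i, StrictMonoOn (C i) (Ici 0)) :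
    IsNashEquilibrium p C x ↔ ∑ j, x j ≤ ymax ∧
      ∀ i, IsStationaryOutput (C i) (p (∑ j, x j)) (p' (∑ j, x j)) (x i) := by
  have hothers : (∀ i, 0 ≤ x i) → ∀ i, 0 ≤ ∑ j, x j - x i := fun hx i =>
    sub_nonneg.2 (Finset.single_le_sum (fun j _ => hx j) (Finset.mem_univ i))
  constructor
  · intro h
    have hlt := h.sum_lt hp hC_mono
    obtain ⟨hx, hmax⟩ := isNashEquilibrium_iff_isMaxOn.1 h
    refine ⟨hlt.le, fun i => ?_⟩
    simpa only [sub_add_cancel] using hp.isStationaryOutput_of_isMaxOn (hC_convex i)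
      (hothers hx i) (hx i) (by rwa [sub_add_cancel]) (hmax i)
  · rintro ⟨hle, hstat⟩
    have hx : ∀ i, 0 ≤ x i := fun i => (hstat i).1
    refine isNashEquilibrium_iff_isMaxOn.2 ⟨hx, fun i => ?_⟩
    exact hp.isMaxOn_of_isStationaryOutput (hC_mono i).monotoneOn (hothers hx i)
      (by rwa [sub_add_cancel]) (by simpa only [sub_add_cancel] using hstat i)

theorem cournot_game_unique_nash_equilibrium_general (hp : IsPriceFunction p p' ymax)
    (hC_convex : ∀ i, ConvexOn ℝ (Ici 0) (C i)) (hC_mono : ∀ i, StrictMonoOn (C i) (Ici 0)) :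
    ∃! x, IsNashEquilibrium p C x := by
  simp only [isNashEquilibrium_iff_isStationaryOutput hp hC_convex hC_mono]
  obtain ⟨x, hx_le, hx⟩ := exists_isStationaryOutput_sum hp hC_convex hC_mono
  refine ⟨x, ⟨hx_le, hx⟩, fun y ⟨hy_le, hy⟩ => ?_⟩
  rcases le_total (∑ j, x j) (∑ j, y j) with h | h
  · exact (eq_of_isStationaryOutput_of_sum_le hp hx hy h hy_le).symm
  · exact eq_of_isStationaryOutput_of_sum_le hp hy hx h hx_le

end Equilibrium

/- STATEMENT 0: A Cournot game satisfying assumptions (A1) and (A2) has exactly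
one Nash equilibrium.

Player `i` chooses a production level `x i ≥ 0` and receives utility
`π_i(x) = p (∑ j, x j) * x i - C i (x i)`. -/
theorem cournot_game_unique_nash_equilibrium
    (N : ℕ) (hN : 0 < N)
    (p p' p'' : ℝ → ℝ) (ymax : ℝ) (hymax : 0 < ymax)
    -- (A1): price function
    (hp_concave : ConcaveOn ℝ (Set.Icc 0 ymax) p)
    (hp_anti : StrictAntiOn p (Set.Icc 0 ymax))
    (hp_deriv : ∀ y ∈ Set.Icc (0:ℝ) ymax, HasDerivWithinAt p (p' y) (Set.Icc 0 ymax) y)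
    (hp_deriv2 : ∀ y ∈ Set.Icc (0:ℝ) ymax, HasDerivWithinAt p' (p'' y) (Set.Icc 0 ymax) y)
    (hp_ymax : p ymax = 0)
    (hp_pos_before : ∀ y ∈ Set.Ico (0:ℝ) ymax, 0 < p y)  -- ymax is the *first* zero of p
    (hp_after : ∀ y, ymax < y → p y = 0)
    (hp0 : 0 < p 0)
    -- (A2): cost functions
    (C C' C'' : Fin N → ℝ → ℝ)
    (hC_convex : ∀ i, ConvexOn ℝ (Set.Ici 0) (C i))
    (hC_mono : ∀ i, StrictMonoOn (C i) (Set.Ici 0))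
    (hC_deriv : ∀ i, ∀ x : ℝ, 0 ≤ x → HasDerivWithinAt (C i) (C' i x) (Set.Ici 0) x)
    (hC_deriv2 : ∀ i, ∀ x : ℝ, 0 ≤ x → HasDerivWithinAt (C' i) (C'' i x) (Set.Ici 0) x)
    (hC'0 : ∀ i, C' i 0 < p 0) :
    -- there is exactly one Nash equilibrium
    ∃! xstar : Fin N → ℝ,
      (∀ i, 0 ≤ xstar i) ∧
      ∀ i : Fin N, ∀ xi : ℝ, 0 ≤ xi →
        p (∑ j, Function.update xstar i xi j) * xi - C i xi ≤
          p (∑ j, xstar j) * xstar i - C i (xstar i) := by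
  have hp : IsPriceFunction p p' ymax :=
    ⟨hymax, hp_concave, hp_anti, hp_deriv,
      fun y hy => hy.eq_or_lt.elim (fun h => (h ▸ hp_ymax).le) fun h => (hp_after y h).le⟩
  exact cournot_game_unique_nash_equilibrium_general hp hC_convex hC_mono
end

section
/- Let h : [0, b] → ℝ be continuous and strictly decreasing with h(0) > 0 and ∫_0^b h(x) dx = 0, and let w : [0, b] → ℝ be positive and strictly increasing. Then ∫_0^b h(x)·w(x) dx < 0. -/
/-!
Chebyshev's integral inequality by symmetrization: the covariance-type quantity
`μ(univ) ∫ f g - ∫ f ∫ g` is half the integral of `(f x - f y) (g x - g y)` over `μ ⊗ μ`.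
If `f` is strictly decreasing and `g` strictly increasing, the integrand is negative off the
diagonal, and the diagonal has full measure only when `μ` is concentrated at a single point.
When `f` has integral zero, what remains is `∫ f g < 0`.
-/

open MeasureTheory Set

section Symmetrization

variable {α 𝕜 : Type*} [MeasurableSpace α] {μ : Measure α} [IsFiniteMeasure μ]
  [RCLike 𝕜] {f g : α → 𝕜}

theorem integrable_sub_mul_sub_prod (hf : Integrable f μ) (hg : Integrable g μ)
    (hfg : Integrable (fun x ↦ f x * g x) μ) :
    Integrable (fun z : α × α ↦ (f z.1 - f z.2) * (g z.1 - g z.2)) (μ.prod μ) := by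
  have hcross : Integrable (fun z : α × α ↦ f z.1 * g z.2 + g z.1 * f z.2) (μ.prod μ) :=
    (hf.mul_prod hg).add (hg.mul_prod hf)
  refine (((hfg.comp_fst μ).add (hfg.comp_snd μ)).sub hcross).congr (.of_forall fun z ↦ ?_)
  simp only [Pi.add_apply, Pi.sub_apply]
  ring

theorem integral_sub_mul_sub_prod (hf : Integrable f μ) (hg : Integrable g μ)
    (hfg : Integrable (fun x ↦ f x * g x) μ) :
    ∫ z : α × α, (f z.1 - f z.2) * (g z.1 - g z.2) ∂μ.prod μ =
      2 * (μ.real univ • ∫ x, f x * g x ∂μ - (∫ x, f x ∂μ) * ∫ x, g x ∂μ) := by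
  have hdiag := (hfg.comp_fst μ).add (hfg.comp_snd μ)
  have hcross := (hf.mul_prod hg).add (hg.mul_prod hf)
  calc ∫ z : α × α, (f z.1 - f z.2) * (g z.1 - g z.2) ∂μ.prod μ
    _ = ∫ z : α × α, (f z.1 * g z.1 + f z.2 * g z.2) - (f z.1 * g z.2 + g z.1 * f z.2)
          ∂μ.prod μ := by congr with z; ring
    _ = (∫ z : α × α, f z.1 * g z.1 + f z.2 * g z.2 ∂μ.prod μ) -
          ∫ z : α × α, f z.1 * g z.2 + g z.1 * f z.2 ∂μ.prod μ := integral_sub hdiag hcross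
    _ = 2 * (μ.real univ • ∫ x, f x * g x ∂μ - (∫ x, f x ∂μ) * ∫ x, g x ∂μ) := by
      rw [integral_add (hfg.comp_fst μ) (hfg.comp_snd μ),
        integral_add (hf.mul_prod hg) (hg.mul_prod hf), integral_prod_mul, integral_prod_mul,
        integral_fun_fst (fun x ↦ f x * g x), integral_fun_snd (fun x ↦ f x * g x)]
      ring

end Symmetrization

theorem exists_ae_eq_const_of_ae_prod_fst_eq_snd {α : Type*} [MeasurableSpace α] [Nonempty α]
    {μ : Measure α} [SFinite μ] (h : ∀ᵐ z ∂μ.prod μ, z.1 = z.2) : ∃ c, ∀ᵐ x ∂μ, x = c := by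
  rcases eq_zero_or_neZero μ with rfl | _
  · simp
  · obtain ⟨c, hc⟩ := (Measure.ae_ae_of_ae_prod h).exists
    exact ⟨c, hc.mono fun _ ↦ Eq.symm⟩

theorem sub_mul_sub_neg_of_strictAntiOn_strictMonoOn {α R : Type*} [LinearOrder α] [Ring R]
    [LinearOrder R] [IsStrictOrderedRing R] {f g : α → R} {s : Set α} (hf : StrictAntiOn f s)
    (hg : StrictMonoOn g s) {x y : α} (hx : x ∈ s) (hy : y ∈ s) (hxy : x ≠ y) :
    (f x - f y) * (g x - g y) < 0 := by
  rcases hxy.lt_or_gt with hlt | hgt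
  · exact mul_neg_of_pos_of_neg (sub_pos.2 (hf hx hy hlt)) (sub_neg.2 (hg hx hy hlt))
  · exact mul_neg_of_neg_of_pos (sub_neg.2 (hf hy hx hgt)) (sub_pos.2 (hg hy hx hgt))

theorem measureReal_univ_mul_integral_mul_lt_of_strictAntiOn_strictMonoOn
    {α : Type*} [MeasurableSpace α] [LinearOrder α] [Nonempty α] {μ : Measure α}
    [IsFiniteMeasure μ] {f g : α → ℝ} {s : Set α} (hs : ∀ᵐ x ∂μ, x ∈ s)
    (hμ : ∀ c, ¬ ∀ᵐ x ∂μ, x = c) (hf : StrictAntiOn f s) (hg : StrictMonoOn g s)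
    (hf_int : Integrable f μ) (hg_int : Integrable g μ)
    (hfg_int : Integrable (fun x ↦ f x * g x) μ) :
    μ.real univ * ∫ x, f x * g x ∂μ < (∫ x, f x ∂μ) * ∫ x, g x ∂μ := by
  let φ : α × α → ℝ := fun z ↦ (f z.1 - f z.2) * (g z.1 - g z.2)
  have hs_prod : ∀ᵐ z ∂μ.prod μ, z.1 ∈ s ∧ z.2 ∈ s :=
    (Measure.quasiMeasurePreserving_fst.ae hs).and (Measure.quasiMeasurePreserving_snd.ae hs)
  have hφ_neg : ∀ᵐ z ∂μ.prod μ, z.1 ≠ z.2 → φ z < 0 :=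
    hs_prod.mono fun _ hz ↦ sub_mul_sub_neg_of_strictAntiOn_strictMonoOn hf hg hz.1 hz.2
  have hφ_nonpos : φ ≤ᵐ[μ.prod μ] 0 := by
    filter_upwards [hφ_neg] with z hz
    by_cases hdiag : z.1 = z.2
    · simp [φ, hdiag]
    · exact (hz hdiag).le
  have hφ_ne : ¬ φ =ᵐ[μ.prod μ] 0 := by
    intro hφ_zero
    have hdiag : ∀ᵐ z ∂μ.prod μ, z.1 = z.2 := by
      filter_upwards [hφ_neg, hφ_zero] with z hz hz_zero
      exact not_imp_comm.1 hz hz_zero.not_lt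
    obtain ⟨c, hc⟩ := exists_ae_eq_const_of_ae_prod_fst_eq_snd hdiag
    exact hμ c hc
  have hφ_int : ∫ z, φ z ∂μ.prod μ < 0 :=
    (integral_nonpos_of_ae hφ_nonpos).lt_of_ne fun hzero ↦ hφ_ne <|
      (integral_eq_iff_of_ae_le (integrable_sub_mul_sub_prod hf_int hg_int hfg_int)
        (integrable_zero _ _ _) hφ_nonpos).1 (by simpa using hzero)
  rw [integral_sub_mul_sub_prod hf_int hg_int hfg_int, smul_eq_mul] at hφ_int
  linarith

theorem measureReal_Ioc_mul_intervalIntegral_mul_lt_of_strictAntiOn_strictMonoOn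
    {a b : ℝ} {μ : Measure ℝ} [IsLocallyFiniteMeasure μ] {f g : ℝ → ℝ}
    (hμ : ∀ c, μ (Ioc a b \ {c}) ≠ 0)
    (hf : StrictAntiOn f (Icc a b)) (hg : StrictMonoOn g (Icc a b)) :
    μ.real (Ioc a b) * ∫ x in a..b, f x * g x ∂μ <
      (∫ x in a..b, f x ∂μ) * ∫ x in a..b, g x ∂μ := by
  have hab : a ≤ b := le_of_not_ge fun hba ↦ hμ a (by simp [Ioc_eq_empty_of_le hba])
  have : IsFiniteMeasure (μ.restrict (Ioc a b)) :=
    isFiniteMeasure_restrict.2 measure_Ioc_lt_top.ne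
  have hrestrict : μ.restrict (Ioc a b) ≤ μ.restrict (Icc a b) :=
    Measure.restrict_mono_set μ Ioc_subset_Icc_self
  have hf_memLp : MemLp f 2 (μ.restrict (Ioc a b)) :=
    (hf.antitoneOn.memLp_isCompact isCompact_Icc).mono_measure hrestrict
  have hg_memLp : MemLp g 2 (μ.restrict (Ioc a b)) :=
    (hg.monotoneOn.memLp_isCompact isCompact_Icc).mono_measure hrestrict
  have hmem : ∀ᵐ x ∂μ.restrict (Ioc a b), x ∈ Icc a b :=
    (ae_restrict_mem measurableSet_Ioc).mono Ioc_subset_Icc_self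
  have hnot_point (c : ℝ) : ¬ ∀ᵐ x ∂μ.restrict (Ioc a b), x = c := by
    simp only [ae_restrict_iff' measurableSet_Ioc, ae_iff, Classical.not_imp]
    exact hμ c
  simpa only [intervalIntegral.integral_of_le hab, measureReal_restrict_apply_univ] using
    measureReal_univ_mul_integral_mul_lt_of_strictAntiOn_strictMonoOn hmem hnot_point hf hg
      (hf_memLp.integrable one_le_two) (hg_memLp.integrable one_le_two)
      (hf_memLp.integrable_mul hg_memLp)

theorem integral_mul_increasing_weight_neg_general {a b : ℝ} {μ : Measure ℝ}
    [IsLocallyFiniteMeasure μ] {h w : ℝ → ℝ} (hμ : ∀ c, μ (Ioc a b \ {c}) ≠ 0)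
    (hh : StrictAntiOn h (Icc a b)) (hw : StrictMonoOn w (Icc a b))
    (hh_int : ∫ x in a..b, h x ∂μ = 0) : ∫ x in a..b, h x * w x ∂μ < 0 := by
  have hlt := measureReal_Ioc_mul_intervalIntegral_mul_lt_of_strictAntiOn_strictMonoOn hμ hh hw
  rw [hh_int, zero_mul] at hlt
  exact neg_of_mul_neg_right hlt measureReal_nonneg

/- STATEMENT 6: Let h : [0, b] → ℝ be continuous and strictly decreasing with
h(0) > 0 and ∫_0^b h = 0, and let w : [0, b] → ℝ be positive and strictly
increasing. Then ∫_0^b h(x)·w(x) dx < 0. -/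
theorem integral_mul_increasing_weight_neg
    (b : ℝ) (hb : 0 < b) (h w : ℝ → ℝ)
    (hh_cont : ContinuousOn h (Set.Icc 0 b))
    (hh_anti : StrictAntiOn h (Set.Icc 0 b))
    (hh0 : 0 < h 0)
    (hh_int : ∫ x in (0:ℝ)..b, h x = 0)
    (hw_pos : ∀ x ∈ Set.Icc (0:ℝ) b, 0 < w x)
    (hw_mono : StrictMonoOn w (Set.Icc 0 b)) :
    ∫ x in (0:ℝ)..b, h x * w x < 0 := by
  refine integral_mul_increasing_weight_neg_general (fun c ↦ ?_) hh_anti hw_mono hh_int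
  simp [measure_sdiff_null, hb]
end
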